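/- Existential elimination theorem: Let K be a quasivariety with the amalgamation property. Then (i) every implicit operation of K defined by a primitive positive formula is interpolated by some implicit operation of K defined by a finite conjunction of equations; and (ii) every implicit operation of K is interpolated by a finite set of implicit operations of K defined by finite conjunctions of equations. -/

import Mathlib

namespace Impl

open FirstOrder Language

universe u v

/-- A bundled algebra (first-order structure) for the language `L`. -/
structure Alg (L : FirstOrder.Language.{u, u}) : Type (u + 1) where
  carrier : Type u
  [str : L.Structure carrier]

attribute [instance] Alg.str

variable {L : FirstOrder.Language.{u, u}}

/-- The direct product of a family of algebras. -/
def Alg.pi {ι : Type u} (A : ι → Alg L) : Alg L where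
  carrier := ∀ i, (A i).carrier
  str :=
    { funMap := fun {k} f v i => Structure.funMap f fun j => v j i
      RelMap := fun {k} r v => ∀ i, Structure.RelMap r fun j => v j i }

/-- The binary direct product of two algebras. -/
def Alg.prod (A B : Alg L) : Alg L where
  carrier := A.carrier × B.carrier
  str :=
    { funMap := fun {k} f v =>
        (Structure.funMap f fun j => (v j).1, Structure.funMap f fun j => (v j).2)
      RelMap := fun {k} r v =>
        Structure.RelMap r (fun j => (v j).1) ∧ Structure.RelMap r fun j => (v j).2 }

/-- The ultraproduct of a family of algebras with respect to an ultrafilter. -/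
def Alg.uprod {ι : Type u} (F : Ultrafilter ι) (A : ι → Alg L) : Alg L where
  carrier := Filter.Product (F : Filter ι) fun i => (A i).carrier
  str := inferInstance

/-- Closure under isomorphic copies. -/
def ClosedUnderIso (K : Set (Alg L)) : Prop :=
  ∀ A B : Alg L, A ∈ K → Nonempty (A.carrier ≃[L] B.carrier) → B ∈ K

/-- Closure under subalgebras (up to the identification of a subalgebra with an embedding). -/
def ClosedUnderSub (K : Set (Alg L)) : Prop :=
  ∀ A B : Alg L, B ∈ K → Nonempty (A.carrier ↪[L] B.carrier) → A ∈ K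

/-- Closure under direct products. -/
def ClosedUnderProd (K : Set (Alg L)) : Prop :=
  ∀ (ι : Type u) (A : ι → Alg L), (∀ i, A i ∈ K) → Alg.pi A ∈ K

/-- Closure under finite direct products. -/
def ClosedUnderFinProd (K : Set (Alg L)) : Prop :=
  ∀ (ι : Type u), Finite ι → ∀ A : ι → Alg L, (∀ i, A i ∈ K) → Alg.pi A ∈ K

/-- Closure under homomorphic images. -/
def ClosedUnderHomImg (K : Set (Alg L)) : Prop :=
  ∀ A B : Alg L, A ∈ K → ∀ h : A.carrier →[L] B.carrier, Function.Surjective h → B ∈ K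

/-- Closure under ultraproducts. -/
def ClosedUnderUprod (K : Set (Alg L)) : Prop :=
  ∀ (ι : Type u) (F : Ultrafilter ι) (A : ι → Alg L), (∀ i, A i ∈ K) → Alg.uprod F A ∈ K

/-- A universal class: a class closed under isomorphic copies, subalgebras and ultraproducts. -/
def IsUniversalClass (K : Set (Alg L)) : Prop :=
  ClosedUnderIso K ∧ ClosedUnderSub K ∧ ClosedUnderUprod K

/-- A quasivariety: a class closed under isomorphic copies, subalgebras, direct products and
ultraproducts. -/
def IsQuasivariety (K : Set (Alg L)) : Prop :=
  ClosedUnderIso K ∧ ClosedUnderSub K ∧ ClosedUnderProd K ∧ ClosedUnderUprod K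

/-- A variety: a class closed under homomorphic images, subalgebras and direct products. -/
def IsVariety (K : Set (Alg L)) : Prop :=
  ClosedUnderHomImg K ∧ ClosedUnderSub K ∧ ClosedUnderProd K

/-- The least quasivariety containing `K`. -/
def QGen (K : Set (Alg L)) : Set (Alg L) :=
  ⋂₀ { M : Set (Alg L) | IsQuasivariety M ∧ K ⊆ M }

/-- The least variety containing `K`. -/
def VGen (K : Set (Alg L)) : Set (Alg L) :=
  ⋂₀ { M : Set (Alg L) | IsVariety M ∧ K ⊆ M }

/-- An elementary class: the class of all models of some first-order theory. -/
def IsElementary (K : Set (Alg L)) : Prop :=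
  ∃ T : L.Theory, ∀ A : Alg L, A ∈ K ↔ ∀ φ ∈ T, A.carrier ⊨ φ

/-- Finite conjunctions of equations (with `⊤` as the empty conjunction). -/
inductive IsConjEq {α : Type v} : ∀ {k : ℕ}, L.BoundedFormula α k → Prop
  | top {k} : IsConjEq (⊤ : L.BoundedFormula α k)
  | equal {k} (t₁ t₂ : L.Term (α ⊕ Fin k)) : IsConjEq (BoundedFormula.equal t₁ t₂)
  | inf {k} {φ ψ : L.BoundedFormula α k} : IsConjEq φ → IsConjEq ψ → IsConjEq (φ ⊓ ψ)

/-- Positive quantifier-free formulas: built from equations, `⊤` and `⊥` using `⊓` and `⊔`. -/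
inductive IsPosQF {α : Type v} : ∀ {k : ℕ}, L.BoundedFormula α k → Prop
  | falsum {k} : IsPosQF (⊥ : L.BoundedFormula α k)
  | top {k} : IsPosQF (⊤ : L.BoundedFormula α k)
  | equal {k} (t₁ t₂ : L.Term (α ⊕ Fin k)) : IsPosQF (BoundedFormula.equal t₁ t₂)
  | inf {k} {φ ψ : L.BoundedFormula α k} : IsPosQF φ → IsPosQF ψ → IsPosQF (φ ⊓ ψ)
  | sup {k} {φ ψ : L.BoundedFormula α k} : IsPosQF φ → IsPosQF ψ → IsPosQF (φ ⊔ ψ)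

/-- Primitive positive (pp) formulas: existentially quantified finite conjunctions of
equations. -/
inductive IsPP {α : Type v} : ∀ {k : ℕ}, L.BoundedFormula α k → Prop
  | of_conjEq {k} {φ : L.BoundedFormula α k} : IsConjEq φ → IsPP φ
  | ex {k} {φ : L.BoundedFormula α (k + 1)} : IsPP φ → IsPP φ.ex

/-- Existential positive formulas: existentially quantified positive quantifier-free
formulas. -/
inductive IsExistPos {α : Type v} : ∀ {k : ℕ}, L.BoundedFormula α k → Prop
  | of_posQF {k} {φ : L.BoundedFormula α k} : IsPosQF φ → IsExistPos φ
  | ex {k} {φ : L.BoundedFormula α (k + 1)} : IsExistPos φ → IsExistPos φ.ex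

/-- Two formulas are equivalent in a class of algebras. -/
def EquivOn (K : Set (Alg L)) {α : Type v} (φ ψ : L.Formula α) : Prop :=
  ∀ A : Alg L, A ∈ K → ∀ x : α → A.carrier, φ.Realize x ↔ ψ.Realize x

/-- A formula is preserved by homomorphisms in `K`. -/
def PreservedByHomsOn (K : Set (Alg L)) {α : Type v} (φ : L.Formula α) : Prop :=
  ∀ A B : Alg L, A ∈ K → B ∈ K → ∀ (h : A.carrier →[L] B.carrier) (x : α → A.carrier),
    φ.Realize x → φ.Realize fun a => h (x a)

/-- A formula is preserved by direct products in `K`. -/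
def PreservedByProdsOn (K : Set (Alg L)) {α : Type v} (φ : L.Formula α) : Prop :=
  ∀ (ι : Type u) (A : ι → Alg L), (∀ i, A i ∈ K) → ∀ x : α → (Alg.pi A).carrier,
    (∀ i, φ.Realize fun a => x a i) → φ.Realize x

/-- An `n`-ary partial function on a class of algebras `K`: a family assigning to each member of
`K` an `n`-ary partial function on its carrier. -/
def PartialFunOn (K : Set (Alg L)) (n : ℕ) :=
  ∀ (A : Alg L), A ∈ K → ((Fin n → A.carrier) →. A.carrier)

/-- A partial function on `K` is defined by the formula `φ(x₁, …, xₙ, y)` (the last variable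
being the output) when its graph on each member of `K` is the solution set of `φ`. -/
def DefinedBy {K : Set (Alg L)} {n : ℕ} (f : PartialFunOn K n)
    (φ : L.Formula (Fin (n + 1))) : Prop :=
  ∀ (A : Alg L) (hA : A ∈ K) (x : Fin n → A.carrier) (b : A.carrier),
    b ∈ f A hA x ↔ φ.Realize (Fin.snoc x b)

/-- The formula `φ(x₁, …, xₙ, y)` is functional in `K`: for all inputs there is at most one
output satisfying it. -/
def FunctionalIn (K : Set (Alg L)) {n : ℕ} (φ : L.Formula (Fin (n + 1))) : Prop :=
  ∀ A : Alg L, A ∈ K → ∀ (x : Fin n → A.carrier) (b₁ b₂ : A.carrier),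
    φ.Realize (Fin.snoc x b₁) → φ.Realize (Fin.snoc x b₂) → b₁ = b₂

/-- A partial function on `K` is an operation of `K` when it is preserved by all homomorphisms
between members of `K`. -/
def IsOperationOn {K : Set (Alg L)} {n : ℕ} (f : PartialFunOn K n) : Prop :=
  ∀ (A B : Alg L) (hA : A ∈ K) (hB : B ∈ K) (h : A.carrier →[L] B.carrier)
    (x : Fin n → A.carrier) (b : A.carrier),
    b ∈ f A hA x → h b ∈ f B hB fun i => h (x i)

/-- A partial function on `K` is implicit when it is defined by some formula. -/
def IsImplicit {K : Set (Alg L)} {n : ℕ} (f : PartialFunOn K n) : Prop :=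
  ∃ φ : L.Formula (Fin (n + 1)), DefinedBy f φ

/-- An implicit operation of `K`: a partial function that is both implicit and an operation. -/
def IsImplicitOp {K : Set (Alg L)} {n : ℕ} (f : PartialFunOn K n) : Prop :=
  IsImplicit f ∧ IsOperationOn f

/-- An implicit operation is extendable when every tuple in every member of `K` lies in the
domain of the operation in some extension inside `K`. -/
def Extendable {K : Set (Alg L)} {n : ℕ} (f : PartialFunOn K n) : Prop :=
  ∀ (A : Alg L) (hA : A ∈ K) (x : Fin n → A.carrier),
    ∃ (B : Alg L) (hB : B ∈ K) (e : A.carrier ↪[L] B.carrier),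
      (f B hB fun i => e (x i)).Dom

/-- The dominion of a subset `s` of `M` relative to the class `K`. -/
def dominion (K : Set (Alg L)) (M : Type u) [L.Structure M] (s : Set M) : Set M :=
  { b | ∀ C : Alg L, C ∈ K → ∀ g h : M →[L] C.carrier, (∀ a ∈ s, g a = h a) → g b = h b }

/-- The strong epimorphism surjectivity property. -/
def StrongES (K : Set (Alg L)) : Prop :=
  ∀ (A B : Alg L), A ∈ K → B ∈ K → ∀ (f : A.carrier →[L] B.carrier) (b : B.carrier),
    b ∉ Set.range f →
      ∃ C : Alg L, C ∈ K ∧ ∃ g h : B.carrier →[L] C.carrier,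
        (∀ a : A.carrier, g (f a) = h (f a)) ∧ g b ≠ h b

/-- The weak epimorphism surjectivity property: every `K`-epimorphism between finitely
generated members of `K` is surjective. -/
def WeakES (K : Set (Alg L)) : Prop :=
  ∀ (A B : Alg L), A ∈ K → B ∈ K →
    Structure.FG L A.carrier → Structure.FG L B.carrier →
      ∀ f : A.carrier →[L] B.carrier,
        (∀ C : Alg L, C ∈ K → ∀ g h : B.carrier →[L] C.carrier,
          (∀ a : A.carrier, g (f a) = h (f a)) → g = h) →
        Function.Surjective f

/-- The amalgamation property. -/
def HasAmalgamation (K : Set (Alg L)) : Prop :=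
  ∀ (A B C : Alg L), A ∈ K → B ∈ K → C ∈ K →
    ∀ (f : A.carrier ↪[L] B.carrier) (g : A.carrier ↪[L] C.carrier),
      ∃ D : Alg L, D ∈ K ∧ ∃ (f' : B.carrier ↪[L] D.carrier) (g' : C.carrier ↪[L] D.carrier),
        ∀ a : A.carrier, f' (f a) = g' (g a)

/-- A finitely presented member of `K`: an algebra in `K` with a finite presentation, phrased
through the usual universal property of `T(X)/Cg_K(Y)`. -/
def FinitelyPresentedIn (K : Set (Alg L)) (B : Alg L) : Prop :=
  B ∈ K ∧ ∃ (m : ℕ) (Y : Finset (L.Term (Fin m) × L.Term (Fin m))) (b : Fin m → B.carrier),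
    Substructure.closure L (Set.range b) = ⊤ ∧
    (∀ p ∈ Y, p.1.realize b = p.2.realize b) ∧
    ∀ C : Alg L, C ∈ K → ∀ x : Fin m → C.carrier,
      (∀ p ∈ Y, p.1.realize x = p.2.realize x) →
        ∃ g : B.carrier →[L] C.carrier, ∀ i, g (b i) = x i

/-- Subdirectly irreducible relative to `K`. -/
def IsRSI (K : Set (Alg L)) (A : Alg L) : Prop :=
  A ∈ K ∧ ∀ (ι : Type u) (B : ι → Alg L), (∀ i, B i ∈ K) →
    ∀ h : A.carrier ↪[L] (Alg.pi B).carrier,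
      (∀ i, Function.Surjective fun a => h a i) →
        ∃ i, Function.Bijective fun a => h a i

/-- Finitely subdirectly irreducible relative to `K`. -/
def IsRFSI (K : Set (Alg L)) (A : Alg L) : Prop :=
  A ∈ K ∧ ∀ (ι : Type u), Finite ι → ∀ B : ι → Alg L, (∀ i, B i ∈ K) →
    ∀ h : A.carrier ↪[L] (Alg.pi B).carrier,
      (∀ i, Function.Surjective fun a => h a i) →
        ∃ i, Function.Bijective fun a => h a i

/-- A congruence on an algebra: an equivalence relation compatible with all the operations. -/
def IsCongruenceOn (A : Alg L) (θ : A.carrier → A.carrier → Prop) : Prop :=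
  Equivalence θ ∧
    ∀ (k : ℕ) (f : L.Functions k) (x y : Fin k → A.carrier),
      (∀ i, θ (x i) (y i)) → θ (Structure.funMap f x) (Structure.funMap f y)

/-- The quotient of an algebra by (the setoid of) an equivalence relation; when the relation is
a congruence this is the quotient algebra. -/
noncomputable def Alg.quot (A : Alg L) (θ : A.carrier → A.carrier → Prop) (h : Equivalence θ) :
    Alg L where
  carrier := Quotient (⟨θ, h⟩ : Setoid A.carrier)
  str :=
    { funMap := fun {k} f v => Quotient.mk _ (Structure.funMap f fun i => (v i).out)
      RelMap := fun {k} r v => Structure.RelMap r fun i => (v i).out }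

/-- A `K`-congruence of `A`: a congruence whose quotient lies in `K`. -/
def IsRelCong (K : Set (Alg L)) (A : Alg L) (θ : A.carrier → A.carrier → Prop) : Prop :=
  ∃ h : IsCongruenceOn A θ, Alg.quot A θ h.1 ∈ K

/-- The join of two relations in the lattice of `K`-congruences of `A`. -/
def relCongJoin (K : Set (Alg L)) (A : Alg L)
    (θ φ : A.carrier → A.carrier → Prop) (x y : A.carrier) : Prop :=
  ∀ ρ : A.carrier → A.carrier → Prop, IsRelCong K A ρ →
    (∀ a b, θ a b → ρ a b) → (∀ a b, φ a b → ρ a b) → ρ x y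

/-- Relative congruence distributivity: the lattice of `K`-congruences of each member of `K`
is distributive. -/
def RelCongDistributive (K : Set (Alg L)) : Prop :=
  ∀ A : Alg L, A ∈ K → ∀ θ φ ψ : A.carrier → A.carrier → Prop,
    IsRelCong K A θ → IsRelCong K A φ → IsRelCong K A ψ →
      ∀ x y : A.carrier,
        (θ x y ∧ relCongJoin K A φ ψ x y) ↔
          relCongJoin K A (fun a b => θ a b ∧ φ a b) (fun a b => θ a b ∧ ψ a b) x y

/-- The join of two relations in the lattice of congruences of `A`. -/
def congJoin (A : Alg L) (θ φ : A.carrier → A.carrier → Prop) (x y : A.carrier) : Prop :=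
  ∀ ρ : A.carrier → A.carrier → Prop, IsCongruenceOn A ρ →
    (∀ a b, θ a b → ρ a b) → (∀ a b, φ a b → ρ a b) → ρ x y

/-- Congruence permutability for all members of a class. -/
def CongPermutableClass (K : Set (Alg L)) : Prop :=
  ∀ A : Alg L, A ∈ K → ∀ θ φ : A.carrier → A.carrier → Prop,
    IsCongruenceOn A θ → IsCongruenceOn A φ →
      ∀ x y : A.carrier, (∃ z, θ x z ∧ φ z y) ↔ ∃ z, φ x z ∧ θ z y

/-- Congruence distributivity for all members of a class. -/
def CongDistributiveClass (K : Set (Alg L)) : Prop :=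
  ∀ A : Alg L, A ∈ K → ∀ θ φ ψ : A.carrier → A.carrier → Prop,
    IsCongruenceOn A θ → IsCongruenceOn A φ → IsCongruenceOn A ψ →
      ∀ x y : A.carrier,
        (θ x y ∧ congJoin A φ ψ x y) ↔
          congJoin A (fun a b => θ a b ∧ φ a b) (fun a b => θ a b ∧ ψ a b) x y

/-- The congruence extension property. -/
def HasCEP (K : Set (Alg L)) : Prop :=
  ∀ A B : Alg L, A ∈ K → B ∈ K → ∀ e : A.carrier ↪[L] B.carrier,
    ∀ θ : A.carrier → A.carrier → Prop, IsCongruenceOn A θ →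
      ∃ ρ : B.carrier → B.carrier → Prop, IsCongruenceOn B ρ ∧
        ∀ x y : A.carrier, θ x y ↔ ρ (e x) (e y)

/-- The language consisting of one new function symbol `gᵢ` of arity `ar i` for each `i`. -/
def newLang {ι : Type u} (ar : ι → ℕ) : FirstOrder.Language.{u, u} where
  Functions := fun n => { i : ι // ar i = n }
  Relations := fun _ => PEmpty

/-- The `L`-reduct of an algebra in an expanded language `L.sum N`. -/
def algReduct {N : FirstOrder.Language.{u, u}} (B : Alg (L.sum N)) : Alg L where
  carrier := B.carrier
  str := (LHom.sumInl : L →ᴸ L.sum N).reduct B.carrier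

/-- The class `K[L_F]` of expansions of members of `K` on which each operation in the family
`f` is total, interpreting the new symbol `gᵢ` as `f i`. -/
def expClass (K : Set (Alg L)) {ι : Type u} (ar : ι → ℕ)
    (f : ∀ i, PartialFunOn K (ar i)) : Set (Alg (L.sum (newLang ar))) :=
  { B | ∃ hB : algReduct B ∈ K,
      ∀ (i : ι) (x : Fin (ar i) → B.carrier),
        Structure.funMap (L := L.sum (newLang ar)) (M := B.carrier)
            (Sum.inr ⟨i, rfl⟩ : (L.sum (newLang ar)).Functions (ar i)) x
          ∈ f i (algReduct B) hB x }

/-- Closure under subalgebras (and isomorphic copies) inside a fixed language. -/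
def SClosure {L' : FirstOrder.Language.{u, u}} (S : Set (Alg L')) : Set (Alg L') :=
  { A | ∃ B ∈ S, Nonempty (A.carrier ↪[L'] B.carrier) }

/-- Membership in `ext_pp(K)`: an extendable implicit operation defined by a pp formula. -/
def InExtPP {K : Set (Alg L)} {n : ℕ} (f : PartialFunOn K n) : Prop :=
  IsOperationOn f ∧ (∃ φ : L.Formula (Fin (n + 1)), IsPP φ ∧ DefinedBy f φ) ∧ Extendable f

/-- `M` is the pp expansion of `K` induced by the family `f` of extendable pp-definable
implicit operations, with one new symbol of arity `ar i` for each `i`. -/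
def IsPPExpansionVia (K : Set (Alg L)) {ι : Type u} (ar : ι → ℕ)
    (f : ∀ i, PartialFunOn K (ar i)) (M : Set (Alg (L.sum (newLang ar)))) : Prop :=
  (∀ i, 0 < ar i) ∧ (∀ i, InExtPP (f i)) ∧ M = SClosure (expClass K ar f)

/-- Every implicit operation of `K` is interpolated in `M` by a set of terms of the expanded
language. -/
def InterpolatesByTermsInExp (K : Set (Alg L)) {ι : Type u} {ar : ι → ℕ}
    (M : Set (Alg (L.sum (newLang ar)))) : Prop :=
  ∀ n : ℕ, 0 < n → ∀ g : PartialFunOn K n, IsImplicitOp g →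
    ∃ T : Set ((L.sum (newLang ar)).Term (Fin n)),
      ∀ A : Alg (L.sum (newLang ar)), A ∈ M →
        ∀ (hA : algReduct A ∈ K) (x : Fin n → A.carrier) (b : A.carrier),
          b ∈ g (algReduct A) hA x → ∃ t ∈ T, t.realize x = b

/-- `M` is a Beth companion of `K` (via the given expansion datum). -/
def IsBethCompanionVia (K : Set (Alg L)) {ι : Type u} (ar : ι → ℕ)
    (f : ∀ i, PartialFunOn K (ar i)) (M : Set (Alg (L.sum (newLang ar)))) : Prop :=
  IsPPExpansionVia K ar f M ∧ InterpolatesByTermsInExp K M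

/-- A pp expansion is congruence preserving when the `M`-congruences of each member of `M`
coincide with the `K`-congruences of its `L`-reduct. -/
def CongPreserving {N : FirstOrder.Language.{u, u}} (K : Set (Alg L))
    (M : Set (Alg (L.sum N))) : Prop :=
  ∀ A : Alg (L.sum N), A ∈ M → ∀ θ : A.carrier → A.carrier → Prop,
    IsRelCong M A θ ↔ IsRelCong K (algReduct A) θ

/-- Reinterpretation of an `L₁`-algebra as an `L₂`-algebra along a map sending `L₂`-symbols to
`L₁`-terms (both languages are assumed to be purely functional). -/
def reinterpret {L₁ L₂ : FirstOrder.Language.{u, u}} (ρ : ∀ n, L₂.Functions n → L₁.Term (Fin n))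
    (A : Alg L₁) : Alg L₂ where
  carrier := A.carrier
  str :=
    { funMap := fun {k} s x => (ρ k s).realize x
      RelMap := fun {k} _ _ => False }

/-- Two expansions of the same base language `L` are faithfully term equivalent relative to
`L`. -/
def FaithfullyTermEquivRel (L : FirstOrder.Language.{u, u}) {N₁ N₂ : FirstOrder.Language.{u, u}}
    (M₁ : Set (Alg (L.sum N₁))) (M₂ : Set (Alg (L.sum N₂))) : Prop :=
  ∃ (τ : ∀ n, (L.sum N₁).Functions n → (L.sum N₂).Term (Fin n))
    (ρ : ∀ n, (L.sum N₂).Functions n → (L.sum N₁).Term (Fin n)),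
    (∀ (n : ℕ) (s : L.Functions n),
      τ n (Sum.inl s) = Term.func (Sum.inl s : (L.sum N₂).Functions n) Term.var) ∧
    (∀ (n : ℕ) (s : L.Functions n),
      ρ n (Sum.inl s) = Term.func (Sum.inl s : (L.sum N₁).Functions n) Term.var) ∧
    (∀ A : Alg (L.sum N₁), A ∈ M₁ → reinterpret ρ A ∈ M₂) ∧
    (∀ B : Alg (L.sum N₂), B ∈ M₂ → reinterpret τ B ∈ M₁) ∧
    (∀ A : Alg (L.sum N₁), A ∈ M₁ → reinterpret τ (reinterpret ρ A) = A) ∧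
    (∀ B : Alg (L.sum N₂), B ∈ M₂ → reinterpret ρ (reinterpret τ B) = B)

/-!
Suppose that `φ(x₁, …, xₙ, y)` is functional in `K` and preserved by homomorphisms, and that `φ`
holds at a tuple `v` of `A ∈ K`. The set `E` of all equations true of `v` is then functional in `K`:
if `w₁, w₂` are solutions of `E` in `B ∈ K` with the same inputs, the projection `A × B → A` is
injective on the subalgebra generated by `(v, wᵢ)`, so amalgamating `A` with `A × B` over that
subalgebra makes `φ` true of `(v, wᵢ)` in an extension `Dᵢ ∈ K` of `A × B`. Amalgamating `D₁` with
`D₂` over `A × B` puts both tuples into one algebra of `K`, where functionality of `φ` forces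
`w₁ = w₂`. An ultraproduct argument replaces `E` by a finite subset, hence by a functional
conjunction of equations true of `v`.

So `φ` is covered by the functional conjunctions of equations. A second ultraproduct argument shows
that finitely many of them suffice. If `φ` is primitive positive then a single one suffices, since a
product of counterexamples, one for each conjunction, would be a tuple satisfying `φ` that is not
covered.
-/

section Products

/-- The projection of a direct product of algebras onto a factor, as a homomorphism. -/
def Alg.piProj {ι : Type u} (A : ι → Alg L) (i : ι) : (Alg.pi A).carrier →[L] (A i).carrier where
  toFun f := f i
  map_fun' _ _ := rfl
  map_rel' _ _ h := h i

/-- The first projection of a binary direct product of algebras, as a homomorphism. -/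
def Alg.prodFst (A B : Alg L) : (Alg.prod A B).carrier →[L] A.carrier where
  toFun p := p.1
  map_fun' _ _ := rfl
  map_rel' _ _ h := h.1

/-- The second projection of a binary direct product of algebras, as a homomorphism. -/
def Alg.prodSnd (A B : Alg L) : (Alg.prod A B).carrier →[L] B.carrier where
  toFun p := p.2
  map_fun' _ _ := rfl
  map_rel' _ _ h := h.2

/-- The canonical embedding of `A × B` into the direct product of the family `true ↦ A`,
`false ↦ B`. The index type is lifted to `Type u`, as `ClosedUnderProd` requires. -/
def Alg.prodEmbeddingPi (A B : Alg L) :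
    (Alg.prod A B).carrier ↪[L]
      (Alg.pi fun i : ULift.{u} Bool => Bool.casesOn i.down B A).carrier where
  toFun p := fun
    | ⟨true⟩ => p.1
    | ⟨false⟩ => p.2
  inj' _ _ h := Prod.ext (congrFun h ⟨true⟩) (congrFun h ⟨false⟩)
  map_fun' _ _ := by
    funext i
    rcases i with ⟨_ | _⟩ <;> rfl
  map_rel' _ _ := ⟨fun h => ⟨h ⟨true⟩, h ⟨false⟩⟩, fun h => by
    rintro ⟨_ | _⟩
    exacts [h.2, h.1]⟩

theorem ClosedUnderProd.prod_mem {K : Set (Alg L)} (hP : ClosedUnderProd K)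
    (hS : ClosedUnderSub K) {A B : Alg L} (hA : A ∈ K) (hB : B ∈ K) : Alg.prod A B ∈ K := by
  refine hS _ _ (hP _ _ ?_) ⟨Alg.prodEmbeddingPi A B⟩
  rintro ⟨_ | _⟩
  exacts [hB, hA]

theorem Alg.realize_term_pi {ι : Type u} (A : ι → Alg L) {α : Type v} (t : L.Term α)
    (x : α → (Alg.pi A).carrier) (i : ι) :
    (t.realize x : (Alg.pi A).carrier) i = t.realize fun a => x a i :=
  (HomClass.realize_term (Alg.piProj A i) (t := t) (v := x)).symm

end Products

section Formulas

variable {α : Type v} {K : Set (Alg L)}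

theorem IsConjEq.realize_comp {M N : Type*} [L.Structure M] [L.Structure N] {k : ℕ}
    {φ : L.BoundedFormula α k} (hφ : IsConjEq φ) (h : M →[L] N) {x : α → M} {y : Fin k → M}
    (hxy : φ.Realize x y) : φ.Realize (h ∘ x) (h ∘ y) := by
  induction hφ with
  | top => exact BoundedFormula.realize_top.2 trivial
  | equal t₁ t₂ =>
    have hts : t₁.realize (Sum.elim x y) = t₂.realize (Sum.elim x y) := hxy
    change t₁.realize _ = t₂.realize _
    rw [← Sum.comp_elim, HomClass.realize_term, HomClass.realize_term, hts]
  | inf _ _ ih₁ ih₂ =>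
    rw [BoundedFormula.realize_inf] at hxy ⊢
    exact ⟨ih₁ hxy.1, ih₂ hxy.2⟩

theorem IsConjEq.preservedByHomsOn {φ : L.Formula α} (hφ : IsConjEq φ) :
    PreservedByHomsOn K φ := fun _ _ _ _ h x hx => by
  rw [Formula.Realize, Subsingleton.elim default (h ∘ default)]
  exact hφ.realize_comp h hx

theorem IsConjEq.iInf {ι : Type*} [Finite ι] {k : ℕ} {φ : ι → L.BoundedFormula α k}
    (hφ : ∀ i, IsConjEq (φ i)) : IsConjEq (BoundedFormula.iInf φ) := by
  rw [BoundedFormula.iInf]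
  generalize Finset.toList _ = l
  induction l with
  | nil => exact .top
  | cons i l ih => exact .inf (hφ i) ih

theorem IsConjEq.realize_pi {ι : Type u} {A : ι → Alg L} {k : ℕ} {φ : L.BoundedFormula α k}
    (hφ : IsConjEq φ) {x : α → (Alg.pi A).carrier} {y : Fin k → (Alg.pi A).carrier}
    (hxy : ∀ i, φ.Realize (Alg.piProj A i ∘ x) (Alg.piProj A i ∘ y)) : φ.Realize x y := by
  induction hφ with
  | top => exact BoundedFormula.realize_top.2 trivial
  | equal t₁ t₂ =>
    change t₁.realize _ = t₂.realize _
    funext i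
    have hts : t₁.realize (Sum.elim _ _) = t₂.realize (Sum.elim _ _) := hxy i
    rw [← Sum.comp_elim] at hts
    rwa [Alg.realize_term_pi, Alg.realize_term_pi]
  | inf _ _ ih₁ ih₂ =>
    simp only [BoundedFormula.realize_inf] at hxy ⊢
    exact ⟨ih₁ fun i => (hxy i).1, ih₂ fun i => (hxy i).2⟩

theorem IsPP.realize_pi {ι : Type u} {A : ι → Alg L} {k : ℕ} {φ : L.BoundedFormula α k}
    (hφ : IsPP φ) {x : α → (Alg.pi A).carrier} {y : Fin k → (Alg.pi A).carrier}
    (hxy : ∀ i, φ.Realize (Alg.piProj A i ∘ x) (Alg.piProj A i ∘ y)) : φ.Realize x y := by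
  induction hφ with
  | of_conjEq hφ => exact hφ.realize_pi hxy
  | ex _ ih =>
    simp only [BoundedFormula.realize_ex] at hxy ⊢
    choose z hz using hxy
    exact ⟨z, ih fun i => (Fin.comp_snoc (Alg.piProj A i) y z).symm ▸ hz i⟩

theorem IsPP.preservedByProdsOn {φ : L.Formula α} (hφ : IsPP φ) : PreservedByProdsOn K φ :=
  fun _ A _ _ hx => hφ.realize_pi fun i => by
    rw [Subsingleton.elim (Alg.piProj A i ∘ default) default]
    exact hx i

/-- The product of one counterexample for each `χ i` would be a tuple satisfying `φ` but no
`χ i`. -/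
theorem PreservedByProdsOn.exists_forall_realize {φ : L.Formula α} (hφ : PreservedByProdsOn K φ)
    (hP : ClosedUnderProd K) {ι : Type u} {χ : ι → L.Formula α}
    (hχ : ∀ i, PreservedByHomsOn K (χ i))
    (hcover : ∀ A ∈ K, ∀ x : α → A.carrier, φ.Realize x → ∃ i, (χ i).Realize x) :
    ∃ i, ∀ A ∈ K, ∀ x : α → A.carrier, φ.Realize x → (χ i).Realize x := by
  by_contra! hcounter
  choose A hA x hφx hχx using hcounter
  have hpi : Alg.pi A ∈ K := hP _ A hA
  obtain ⟨i, hi⟩ := hcover _ hpi (fun a i => x i a) (hφ _ A hA _ hφx)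
  exact hχx i (hχ i _ _ hpi (hA i) (Alg.piProj A i) _ hi)

end Formulas

section Compactness

variable {α : Type v} {K : Set (Alg L)}

theorem ClosedUnderUprod.exists_realize_of_eventually [Nonempty α] (hU : ClosedUnderUprod K)
    {ι : Type u} (l : Filter ι) [l.NeBot] (A : ι → Alg L) (hA : ∀ i, A i ∈ K)
    (x : ∀ i, α → (A i).carrier) :
    ∃ B ∈ K, ∃ y : α → B.carrier, ∀ χ : L.Formula α,
      (∀ᶠ i in l, χ.Realize (x i)) → χ.Realize y := by
  have hne : ∀ i, Nonempty (A i).carrier := fun i => ‹Nonempty α›.map (x i)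
  refine ⟨Alg.uprod (Ultrafilter.of l) A, hU _ _ A hA,
    fun a => Quotient.mk _ fun i => x i a, fun χ hχ => ?_⟩
  exact (Ultraproduct.realize_formula_cast χ fun a i => x i a).2 (Ultrafilter.of_le l hχ)

theorem ClosedUnderUprod.exists_finset_cover [Nonempty α] (hU : ClosedUnderUprod K)
    {φ : L.Formula α} {ι : Type u} {χ : ι → L.Formula α}
    (hcover : ∀ A ∈ K, ∀ x : α → A.carrier, φ.Realize x → ∃ i, (χ i).Realize x) :
    ∃ s : Finset ι, ∀ A ∈ K, ∀ x : α → A.carrier, φ.Realize x → ∃ i ∈ s, (χ i).Realize x := by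
  by_contra! hcounter
  choose A hA x hφx hχx using hcounter
  obtain ⟨B, hB, y, hy⟩ := hU.exists_realize_of_eventually Filter.atTop A hA x
  obtain ⟨i, hi⟩ := hcover B hB y (hy φ (.of_forall hφx))
  have hnot : (χ i).not.Realize y := hy _ <|
    (Filter.eventually_ge_atTop {i}).mono fun s his => hχx s i (his (Finset.mem_singleton_self i))
  exact hnot hi

end Compactness

section Equations

variable {α : Type v}

/-- Equations `t ≈ s` in variables `α`, encoded as pairs of terms. -/
abbrev Equation (L : FirstOrder.Language.{u, u}) (α : Type v) := L.Term α × L.Term α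

variable (L) in
/-- The set of all equations that hold of the tuple `v`, its equational type. -/
def eqTheory {M : Type*} [L.Structure M] (v : α → M) : Set (Equation L α) :=
  {p | p.1.realize v = p.2.realize v}

theorem exists_term_realize_of_mem_closure_range {M : Type*} [L.Structure M] {v : α → M} {a : M}
    (ha : a ∈ Substructure.closure L (Set.range v)) : ∃ t : L.Term α, t.realize v = a := by
  obtain ⟨t, rfl⟩ := Substructure.mem_closure_iff_exists_term.1 ha
  exact ⟨t.relabel (Set.rangeSplitting v), by rw [Term.realize_relabel, Set.comp_rangeSplitting]⟩

theorem injOn_closure_range_of_eqTheory_subset {M N : Type*} [L.Structure M] [L.Structure N]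
    (h : M →[L] N) {v : α → M} (hv : eqTheory L (h ∘ v) ⊆ eqTheory L v) :
    Set.InjOn h (Substructure.closure L (Set.range v)) := by
  intro a ha b hb hab
  obtain ⟨t, rfl⟩ := exists_term_realize_of_mem_closure_range ha
  obtain ⟨s, rfl⟩ := exists_term_realize_of_mem_closure_range hb
  rw [← HomClass.realize_term, ← HomClass.realize_term] at hab
  exact @hv (t, s) hab

theorem Alg.eqTheory_prod {A B : Alg L} (z : α → (Alg.prod A B).carrier) :
    eqTheory L z = eqTheory L (Alg.prodFst A B ∘ z) ∩ eqTheory L (Alg.prodSnd A B ∘ z) := by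
  ext ⟨t, s⟩
  simp only [eqTheory, Set.mem_inter_iff, Set.mem_ofPred_eq, HomClass.realize_term]
  exact Prod.ext_iff

/-- If `p` is injective on the subalgebra generated by `w`, then truth of `φ` at `p ∘ w` can be
carried back to `w` by amalgamating over this subalgebra. -/
theorem HasAmalgamation.exists_embedding_realize [L.IsAlgebraic] {K : Set (Alg L)}
    (hAP : HasAmalgamation K) (hS : ClosedUnderSub K) {φ : L.Formula α}
    (hφ : PreservedByHomsOn K φ) {A B : Alg L} (hA : A ∈ K) (hB : B ∈ K)
    (p : B.carrier →[L] A.carrier) {w : α → B.carrier}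
    (hw : eqTheory L (p ∘ w) ⊆ eqTheory L w) (hpw : φ.Realize (p ∘ w)) :
    ∃ D ∈ K, ∃ k : B.carrier ↪[L] D.carrier, φ.Realize (k ∘ w) := by
  let S : L.Substructure B.carrier := Substructure.closure L (Set.range w)
  have hinj : Function.Injective (p.comp S.subtype.toHom) :=
    (injOn_closure_range_of_eqTheory_subset p hw).injective
  obtain ⟨D, hD, k, l, hkl⟩ := hAP ⟨S⟩ B A (hS ⟨S⟩ B hB ⟨S.subtype⟩) hB hA
    S.subtype (Embedding.ofInjective hinj)
  have hcomp : l ∘ p ∘ w = k ∘ w :=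
    funext fun a => (hkl ⟨w a, Substructure.subset_closure ⟨a, rfl⟩⟩).symm
  exact ⟨D, hD, k, hcomp ▸ hφ A D hA hD l.toHom _ hpw⟩

end Equations

section Functional

variable {n : ℕ} {K : Set (Alg L)}

/-- A set of equations in the variables `x₁, …, xₙ, y` is functional in `K` when any two of its
solutions in a member of `K` that agree on `x₁, …, xₙ` agree on `y`. It is the analogue of
`FunctionalIn` for a possibly infinite conjunction of equations. -/
def EqsFunctionalIn (K : Set (Alg L)) (E : Set (Equation L (Fin (n + 1)))) : Prop :=
  ∀ A ∈ K, ∀ v w : Fin (n + 1) → A.carrier, Fin.init v = Fin.init w →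
    E ⊆ eqTheory L v → E ⊆ eqTheory L w → v (Fin.last n) = w (Fin.last n)

theorem functionalIn_iff_init {φ : L.Formula (Fin (n + 1))} :
    FunctionalIn K φ ↔ ∀ A ∈ K, ∀ v w : Fin (n + 1) → A.carrier, Fin.init v = Fin.init w →
      φ.Realize v → φ.Realize w → v (Fin.last n) = w (Fin.last n) := by
  refine ⟨fun hφ A hA v w hvw hv hw => ?_, fun hφ A hA x b₁ b₂ h₁ h₂ => ?_⟩
  · rw [← Fin.snoc_init_self v] at hv
    rw [← Fin.snoc_init_self w, ← hvw] at hw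
    exact hφ A hA _ _ _ hv hw
  · simpa using hφ A hA _ _ (by simp) h₁ h₂

theorem eqsFunctionalIn_eqTheory [L.IsAlgebraic] (hS : ClosedUnderSub K) (hP : ClosedUnderProd K)
    (hAP : HasAmalgamation K) {φ : L.Formula (Fin (n + 1))} (hfun : FunctionalIn K φ)
    (hφ : PreservedByHomsOn K φ) {A : Alg L} (hA : A ∈ K) {v : Fin (n + 1) → A.carrier}
    (hv : φ.Realize v) : EqsFunctionalIn K (eqTheory L v) := by
  intro B hB w₁ w₂ hinit hw₁ hw₂
  let pair (w : Fin (n + 1) → B.carrier) (i : Fin (n + 1)) : (Alg.prod A B).carrier := (v i, w i)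
  have hAB : Alg.prod A B ∈ K := hP.prod_mem hS hA hB
  have extend {w : Fin (n + 1) → B.carrier} (hw : eqTheory L v ⊆ eqTheory L w) :
      ∃ D ∈ K, ∃ k : (Alg.prod A B).carrier ↪[L] D.carrier, φ.Realize (k ∘ pair w) := by
    refine hAP.exists_embedding_realize hS hφ hA hAB (Alg.prodFst A B) ?_ hv
    rw [Alg.eqTheory_prod (pair w)]
    exact Set.subset_inter subset_rfl hw
  obtain ⟨D₁, hD₁, k₁, hk₁⟩ := extend hw₁
  obtain ⟨D₂, hD₂, k₂, hk₂⟩ := extend hw₂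
  obtain ⟨D, hD, l₁, l₂, hl⟩ := hAP _ D₁ D₂ hAB hD₁ hD₂ k₁ k₂
  have hl₁ : φ.Realize (l₁ ∘ k₁ ∘ pair w₁) := hφ D₁ D hD₁ hD l₁.toHom _ hk₁
  have hl₂ : φ.Realize (l₁ ∘ k₁ ∘ pair w₂) := by
    rw [show l₁ ∘ k₁ ∘ pair w₂ = l₂ ∘ k₂ ∘ pair w₂ from funext fun i => hl (pair w₂ i)]
    exact hφ D₂ D hD₂ hD l₂.toHom _ hk₂
  have hlinit : Fin.init (l₁ ∘ k₁ ∘ pair w₁) = Fin.init (l₁ ∘ k₁ ∘ pair w₂) :=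
    funext fun i => congrArg (fun b => l₁ (k₁ (v i.castSucc, b))) (congrFun hinit i)
  have hpair : l₁ (k₁ (pair w₁ (Fin.last n))) = l₁ (k₁ (pair w₂ (Fin.last n))) :=
    functionalIn_iff_init.1 hfun D hD _ _ hlinit hl₁ hl₂
  exact congrArg Prod.snd (k₁.injective (l₁.injective hpair))

theorem EqsFunctionalIn.exists_finset_subset (hU : ClosedUnderUprod K)
    {E : Set (Equation L (Fin (n + 1)))} (hE : EqsFunctionalIn K E) :
    ∃ s : Finset (Equation L (Fin (n + 1))),
      ↑s ⊆ E ∧ EqsFunctionalIn K (s : Set (Equation L (Fin (n + 1)))) := by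
  by_contra! hcounter
  have hnot (s : Finset E) : ¬ EqsFunctionalIn K
      (s.map (.subtype (· ∈ E)) : Set (Equation L (Fin (n + 1)))) :=
    hcounter _ (by simp)
  simp only [EqsFunctionalIn, not_forall] at hnot
  choose A hA v w hinit hv hw hne using hnot
  obtain ⟨B, hB, y, hy⟩ := hU.exists_realize_of_eventually Filter.atTop A hA
    fun s => Sum.elim (v s) (w s)
  have heqs (t₁ t₂ : L.Term (Fin (n + 1) ⊕ Fin (n + 1)))
      (h : ∀ᶠ s in Filter.atTop, t₁.realize (Sum.elim (v s) (w s)) =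
        t₂.realize (Sum.elim (v s) (w s))) : t₁.realize y = t₂.realize y := by
    simpa using hy (t₁.equal t₂) (by simpa using h)
  have hmem {p} (hp : p ∈ E) : ∀ᶠ s : Finset E in Filter.atTop, p ∈ s.map (.subtype (· ∈ E)) :=
    (Filter.eventually_ge_atTop {⟨p, hp⟩}).mono fun s hs => by simpa [hp] using hs
  have hyinit : Fin.init (y ∘ Sum.inl) = Fin.init (y ∘ Sum.inr) := funext fun i =>
    heqs (.var (.inl i.castSucc)) (.var (.inr i.castSucc))
      (.of_forall fun s => congrFun (hinit s) i)
  have hyl : E ⊆ eqTheory L (y ∘ Sum.inl) := fun p hp => by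
    simpa [eqTheory] using heqs (p.1.relabel .inl) (p.2.relabel .inl)
      ((hmem hp).mono fun s hs => by simpa using show _ = _ from hv s hs)
  have hyr : E ⊆ eqTheory L (y ∘ Sum.inr) := fun p hp => by
    simpa [eqTheory] using heqs (p.1.relabel .inr) (p.2.relabel .inr)
      ((hmem hp).mono fun s hs => by simpa using show _ = _ from hw s hs)
  have hyne : y (.inl (Fin.last n)) ≠ y (.inr (Fin.last n)) := by
    simpa using hy (Term.equal (.var (.inl (Fin.last n))) (.var (.inr (Fin.last n)))).not
      (.of_forall fun s => by simpa using hne s)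
  exact hyne (hE B hB _ _ hyinit hyl hyr)

theorem EqsFunctionalIn.exists_isConjEq (hU : ClosedUnderUprod K)
    {E : Set (Equation L (Fin (n + 1)))} (hE : EqsFunctionalIn K E) :
    ∃ ψ : L.Formula (Fin (n + 1)), IsConjEq ψ ∧ FunctionalIn K ψ ∧
      ∀ (A : Alg L) (v : Fin (n + 1) → A.carrier), E ⊆ eqTheory L v → ψ.Realize v := by
  obtain ⟨s, hsE, hs⟩ := hE.exists_finset_subset hU
  have hreal (B : Alg L) (w : Fin (n + 1) → B.carrier) :
      (Formula.iInf fun p : s => p.1.1.equal p.1.2).Realize w ↔ ↑s ⊆ eqTheory L w := by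
    simp [Set.subset_def, eqTheory]
  refine ⟨Formula.iInf fun p : s => p.1.1.equal p.1.2, .iInf fun p => .equal _ _, ?_,
    fun A v hEv => (hreal A v).2 (hsE.trans hEv)⟩
  exact functionalIn_iff_init.2 fun B hB w₁ w₂ hinit h₁ h₂ =>
    hs B hB w₁ w₂ hinit ((hreal B w₁).1 h₁) ((hreal B w₂).1 h₂)

end Functional

section Operations

variable {n : ℕ} {K : Set (Alg L)} {f : PartialFunOn K n} {φ : L.Formula (Fin (n + 1))}

theorem DefinedBy.functionalIn (hf : DefinedBy f φ) : FunctionalIn K φ :=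
  fun A hA x b₁ b₂ h₁ h₂ => Part.mem_unique ((hf A hA x b₁).2 h₁) ((hf A hA x b₂).2 h₂)

theorem FunctionalIn.exists_definedBy (hφ : FunctionalIn K φ) :
    ∃ f : PartialFunOn K n, DefinedBy f φ := by
  refine ⟨fun A _ x => ⟨∃ b : A.carrier, φ.Realize (Fin.snoc x b), Exists.choose⟩,
    fun A hA x b => ⟨?_, fun hb => ⟨⟨b, hb⟩, ?_⟩⟩⟩
  · rintro ⟨hdom, rfl⟩
    exact hdom.choose_spec
  · exact hφ A hA x _ _ (Exists.choose_spec (⟨b, hb⟩ : ∃ b, φ.Realize (Fin.snoc x b))) hb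

theorem DefinedBy.isOperationOn_iff (hf : DefinedBy f φ) :
    IsOperationOn f ↔ PreservedByHomsOn K φ := by
  have hsnoc {A B : Alg L} (h : A.carrier →[L] B.carrier) (x : Fin n → A.carrier) (b : A.carrier) :
      (Fin.snoc (fun i => h (x i)) (h b) : Fin (n + 1) → B.carrier) =
        fun i => h ((Fin.snoc x b : Fin (n + 1) → A.carrier) i) :=
    (Fin.comp_snoc h x b).symm
  refine ⟨fun hop A B hA hB h v hv => ?_, fun hφ A B hA hB h x b hb => ?_⟩
  · rw [← Fin.snoc_init_self v] at hv ⊢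
    rw [← hsnoc]
    exact (hf B hB _ _).1 (hop A B hA hB h _ _ ((hf A hA _ _).2 hv))
  · rw [hf, hsnoc]
    exact hφ A B hA hB h _ ((hf A hA x b).1 hb)

theorem DefinedBy.exists_isConjEq_functionalIn_realize [L.IsAlgebraic] (hf : DefinedBy f φ)
    (hop : IsOperationOn f) (hK : IsQuasivariety K) (hAP : HasAmalgamation K) :
    ∀ A ∈ K, ∀ v : Fin (n + 1) → A.carrier, φ.Realize v →
      ∃ ψ : {ψ : L.Formula (Fin (n + 1)) // IsConjEq ψ ∧ FunctionalIn K ψ}, ψ.1.Realize v := by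
  obtain ⟨-, hS, hP, hU⟩ := hK
  intro A hA v hv
  obtain ⟨ψ, hψ, hψfun, hψv⟩ := (eqsFunctionalIn_eqTheory hS hP hAP hf.functionalIn
    (hf.isOperationOn_iff.1 hop) hA hv).exists_isConjEq hU
  exact ⟨⟨ψ, hψ, hψfun⟩, hψv A v subset_rfl⟩

end Operations

/-- **Existential elimination theorem.** Let `K` be a quasivariety with the
amalgamation property. Then (i) every implicit operation of `K` defined by a primitive
positive formula is interpolated by some implicit operation of `K` defined by a finite
conjunction of equations; and (ii) every implicit operation of `K` is interpolated by a finite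
set of implicit operations of `K` defined by finite conjunctions of equations. -/
theorem statement_6 {L : FirstOrder.Language.{u, u}} [L.IsAlgebraic]
    {K : Set (Alg L)} (hK : IsQuasivariety K) (hAP : HasAmalgamation K) :
    (∀ n : ℕ, 0 < n → ∀ (g : PartialFunOn K n) (φ : L.Formula (Fin (n + 1))),
      IsPP φ → DefinedBy g φ → IsOperationOn g →
        ∃ (f : PartialFunOn K n) (ψ : L.Formula (Fin (n + 1))),
          IsConjEq ψ ∧ DefinedBy f ψ ∧ IsOperationOn f ∧
            ∀ (A : Alg L) (hA : A ∈ K) (x : Fin n → A.carrier) (b : A.carrier),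
              b ∈ g A hA x → b ∈ f A hA x) ∧
    (∀ n : ℕ, 0 < n → ∀ g : PartialFunOn K n, IsImplicitOp g →
      ∃ (m : ℕ) (f : Fin m → PartialFunOn K n),
        (∀ j, ∃ ψ : L.Formula (Fin (n + 1)),
          IsConjEq ψ ∧ DefinedBy (f j) ψ ∧ IsOperationOn (f j)) ∧
        ∀ (A : Alg L) (hA : A ∈ K) (x : Fin n → A.carrier) (b : A.carrier),
          b ∈ g A hA x → ∃ j, b ∈ f j A hA x) := by
  refine ⟨fun n _ g φ hφ hg hop => ?_, fun n _ g ⟨⟨φ, hg⟩, hop⟩ => ?_⟩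
  · obtain ⟨⟨ψ, hψ, hψfun⟩, hle⟩ := hφ.preservedByProdsOn.exists_forall_realize hK.2.2.1
      (fun χ => χ.2.1.preservedByHomsOn) (hg.exists_isConjEq_functionalIn_realize hop hK hAP)
    obtain ⟨f, hf⟩ := hψfun.exists_definedBy
    exact ⟨f, ψ, hψ, hf, hf.isOperationOn_iff.2 hψ.preservedByHomsOn, fun A hA x b hb =>
      (hf A hA x b).2 (hle A hA _ ((hg A hA x b).1 hb))⟩
  · obtain ⟨s, hs⟩ := hK.2.2.2.exists_finset_cover
      (hg.exists_isConjEq_functionalIn_realize hop hK hAP)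
    choose f hf using fun χ : s => χ.1.2.2.exists_definedBy
    refine ⟨s.card, fun j => f (s.equivFin.symm j), fun j => ⟨_, (s.equivFin.symm j).1.2.1, hf _,
      (hf _).isOperationOn_iff.2 (s.equivFin.symm j).1.2.1.preservedByHomsOn⟩, ?_⟩
    intro A hA x b hb
    obtain ⟨χ, hχs, hχ⟩ := hs A hA _ ((hg A hA x b).1 hb)
    exact ⟨s.equivFin ⟨χ, hχs⟩, by simpa using (hf ⟨χ, hχs⟩ A hA x b).2 hχ⟩

end Impl
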